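/- Let λ be a partition, n, m ≥ 1, T ∈ B_λ(n,m), and 1 ≤ i ≤ m−1. Apply the i-bracketing rule to the word w(T), where each position of w(T) corresponds to a unique box of T. Suppose some letter i+1 is unmatched, and let B be the box of T corresponding to the leftmost unmatched letter i+1; say B carries the entry (k,i+1). Then the filling T' obtained from T by changing the entry of B from (k,i+1) to (k,i) is again a lexicographic bitableau in B_λ(n,m); moreover a(T') = a(T) and b(T') = b(T) + e_i − e_{i+1} (where e_j is the j-th standard basis vector of ℕ^m). -/

import Mathlib

/-- Lexicographic (weak) order on pairs: `(a,b) ≤ (a',b')` iff `a < a'`, or `a = a'` and `b ≤ b'`. -/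
def lexLe (p q : ℕ × ℕ) : Prop := p.1 < q.1 ∨ (p.1 = q.1 ∧ p.2 ≤ q.2)

/-- Lexicographic strict order on pairs. -/
def lexLt (p q : ℕ × ℕ) : Prop := p.1 < q.1 ∨ (p.1 = q.1 ∧ p.2 < q.2)

/-- `T` (a total function on positions, row & column both 0-indexed) is a lexicographic
bitableau of shape `lam` with entries in `[n] × [m]`: on the cells of `lam`, entries are pairs
in `{1,…,n} × {1,…,m}`, weakly increasing along rows and strictly increasing down columns
for the lexicographic order. -/
def IsBitabT (lam : YoungDiagram) (n m : ℕ) (T : ℕ → ℕ → ℕ × ℕ) : Prop :=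
  (∀ i j, (i, j) ∈ lam → (1 ≤ (T i j).1 ∧ (T i j).1 ≤ n) ∧ (1 ≤ (T i j).2 ∧ (T i j).2 ≤ m)) ∧
  (∀ i j j', (i, j') ∈ lam → j ≤ j' → lexLe (T i j) (T i j')) ∧
  (∀ i i' j, (i', j) ∈ lam → i < i' → lexLt (T i j) (T i' j))

/-- `i`-th entry of the `a`-weight of `T`: the number of boxes whose entry has first coordinate `i`. -/
def aWtT (lam : YoungDiagram) (T : ℕ → ℕ → ℕ × ℕ) (i : ℕ) : ℕ :=
  (lam.cells.filter fun c => (T c.1 c.2).1 = i).card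

/-- `j`-th entry of the `b`-weight of `T`: the number of boxes whose entry has second coordinate `j`. -/
def bWtT (lam : YoungDiagram) (T : ℕ → ℕ → ℕ × ℕ) (j : ℕ) : ℕ :=
  (lam.cells.filter fun c => (T c.1 c.2).2 = j).card

/-- The list of boxes of `T` in sort-by-top reading order: boxes with first coordinate
`k = 1, …, n` in increasing order, within each group rows from bottom to top, left to right
within each row. -/
def wBoxes (lam : YoungDiagram) (n : ℕ) (T : ℕ → ℕ → ℕ × ℕ) : List (ℕ × ℕ) :=
  (List.range n).flatMap fun k =>
    ((List.range (lam.colLen 0)).reverse).flatMap fun r =>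
      ((List.range (lam.rowLen r)).filter fun c => decide ((T r c).1 = k + 1)).map fun c => (r, c)

/-- The sort-by-top reading word `w(T)`: the second coordinates of the boxes, in sort-by-top
reading order. -/
def wWordT (lam : YoungDiagram) (n : ℕ) (T : ℕ → ℕ → ℕ × ℕ) : List ℕ :=
  (wBoxes lam n T).map fun c => (T c.1 c.2).2

/-- Under the `i`-bracketing rule (each letter `i` becomes `)`, each letter `i+1` becomes `(`,
other letters are ignored), the letter at position `p` of `w` is an unmatched `)` (letter `i`):
equivalently, every window of `w` ending at `p` contains strictly more letters `i` than
letters `i+1`. -/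
def UnmatchedClose (w : List ℕ) (i p : ℕ) : Prop :=
  p < w.length ∧ w.getD p 0 = i ∧
    ∀ q, q ≤ p →
      ((w.drop q).take (p + 1 - q)).count (i + 1) < ((w.drop q).take (p + 1 - q)).count i

/-- Under the `i`-bracketing rule, the letter at position `p` of `w` is an unmatched `(`
(letter `i+1`): equivalently, every window of `w` starting at `p` contains strictly more
letters `i+1` than letters `i`. -/
def UnmatchedOpen (w : List ℕ) (i p : ℕ) : Prop :=
  p < w.length ∧ w.getD p 0 = i + 1 ∧
    ∀ q, p ≤ q → q < w.length →
      ((w.drop p).take (q + 1 - p)).count i < ((w.drop p).take (q + 1 - p)).count (i + 1)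

/-!
Lowering the entry `(k, i + 1)` of the box `B = (r, c)` to `(k, i)` can only violate the tableau
conditions at the box to the left of `B`, if it carries `(k, i + 1)`, or at the box above `B`, if it
carries `(k, i)`.

If the left neighbour carries `(k, i + 1)`, it is read immediately before `B`, so its letter is
unmatched as well, and `B` is not leftmost.

If the upper neighbour carries `(k, i)`, let `D` be the last box of row `r - 1` carrying `(k, i)`.
Between `B` and `D` the letters `i + 1` all lie in row `r`, weakly to the right of `B`, and each of
them has a letter `i` directly above it, which is again read between `B` and `D`. So this window
contains at least as many letters `i` as letters `i + 1`, and `B` is matched.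
-/

section

open Finset

variable {lam : YoungDiagram} {n m i p q : ℕ} {T : ℕ → ℕ → ℕ × ℕ}

section Lex

variable {x y : ℕ × ℕ} {k : ℕ}

theorem lexLe_iff_toLex_le : lexLe x y ↔ toLex x ≤ toLex y :=
  Prod.Lex.toLex_le_toLex.symm

theorem lexLt_iff_toLex_lt : lexLt x y ↔ toLex x < toLex y :=
  Prod.Lex.toLex_lt_toLex.symm

theorem lexLe_of_lexLe_succ_of_ne (h : lexLe x (k, i + 1)) (hne : x ≠ (k, i + 1)) :
    lexLe x (k, i) := by
  simp only [lexLe, ne_eq, Prod.ext_iff] at *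
  omega

theorem lexLt_of_lexLt_succ_of_ne (h : lexLt x (k, i + 1)) (hne : x ≠ (k, i)) :
    lexLt x (k, i) := by
  simp only [lexLt, ne_eq, Prod.ext_iff] at *
  omega

end Lex

section SortedList

variable {α β : Type*} {L : List α} {f : α → β}

theorem apply_getElem_lt_iff_of_sortedLT_map [Preorder β] (hL : (L.map f).SortedLT)
    (hp : p < L.length) (hq : q < L.length) : f L[p] < f L[q] ↔ p < q := by
  have hp' : p < (L.map f).length := by rwa [List.length_map]
  have hq' : q < (L.map f).length := by rwa [List.length_map]
  simpa using hL.strictMono_get.lt_iff_lt (a := ⟨p, hp'⟩) (b := ⟨q, hq'⟩)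

theorem mem_take_drop_iff_of_sortedLT_map [LinearOrder β] (hL : (L.map f).SortedLT)
    (hp : p < L.length) (hq : q < L.length) {x : α} :
    x ∈ (L.drop p).take (q + 1 - p) ↔ x ∈ L ∧ f x ∈ Set.Icc (f L[p]) (f L[q]) := by
  have getElem_le_iff {s t : ℕ} (hs : s < L.length) (ht : t < L.length) :
      f L[s] ≤ f L[t] ↔ s ≤ t :=
    le_iff_le_iff_lt_iff_lt.2 (apply_getElem_lt_iff_of_sortedLT_map hL ht hs)
  constructor
  · intro hx
    obtain ⟨s, hs, rfl⟩ := List.mem_iff_getElem.1 hx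
    simp only [List.length_take, List.length_drop] at hs
    simp only [List.getElem_take, List.getElem_drop, List.getElem_mem, Set.mem_Icc,
      getElem_le_iff, true_and]
    omega
  · rintro ⟨hx, hpx, hxq⟩
    obtain ⟨s, hs, rfl⟩ := List.mem_iff_getElem.1 hx
    rw [getElem_le_iff] at hpx hxq
    refine List.mem_iff_getElem.2 ⟨s - p, ?_, ?_⟩
    · simp only [List.length_take, List.length_drop]
      omega
    · simp [Nat.add_sub_cancel' hpx]

theorem count_map_eq_card_filter_toFinset [DecidableEq α] [DecidableEq β] (hL : L.Nodup) (b : β) :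
    (L.map f).count b = #{x ∈ L.toFinset | f x = b} := by
  have hfilter : {x ∈ L.toFinset | f x = b} = (L.filter (f · = b)).toFinset := by
    simp [List.toFinset_filter]
  rw [hfilter, List.toFinset_card_of_nodup (hL.filter _), List.count, List.countP_map,
    List.countP_eq_length_filter]
  rfl

end SortedList

theorem UnmatchedOpen.of_succ {w : List ℕ} (hp : UnmatchedOpen w i (p + 1))
    (hletter : w.getD p 0 = i + 1) : UnmatchedOpen w i p := by
  obtain ⟨hlt, -, hwindow⟩ := hp
  have hpw : p < w.length := by omega
  refine ⟨hpw, hletter, fun q hpq hq ↦ ?_⟩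
  rw [List.getD_eq_getElem _ _ hpw] at hletter
  rw [List.drop_eq_getElem_cons hpw, hletter, show q + 1 - p = (q - p) + 1 by omega,
    List.take_succ_cons, List.count_cons_self, List.count_cons_of_ne (by omega)]
  obtain rfl | hpq := hpq.eq_or_lt
  · simp
  · have := hwindow q hpq hq
    rw [Nat.add_sub_add_right] at this
    omega

section ReadingOrder

/-- Sort key of a box of the filling `T`: comparing keys amounts to comparing positions in the
sort-by-top reading order, that is, first coordinates of entries, then rows from bottom to top
(hence the order dual), then columns from left to right. -/
def readingKey (T : ℕ → ℕ → ℕ × ℕ) (x : ℕ × ℕ) : ℕ ×ₗ ℕᵒᵈ ×ₗ ℕ :=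
  toLex ((T x.1 x.2).1, toLex (OrderDual.toDual x.1, x.2))

theorem readingKey_lt_iff {x y : ℕ × ℕ} :
    readingKey T x < readingKey T y ↔ (T x.1 x.2).1 < (T y.1 y.2).1 ∨
      (T x.1 x.2).1 = (T y.1 y.2).1 ∧ (y.1 < x.1 ∨ x.1 = y.1 ∧ x.2 < y.2) := by
  simp [readingKey, Prod.Lex.toLex_lt_toLex]

theorem readingKey_le_iff {x y : ℕ × ℕ} :
    readingKey T x ≤ readingKey T y ↔ (T x.1 x.2).1 < (T y.1 y.2).1 ∨
      (T x.1 x.2).1 = (T y.1 y.2).1 ∧ (y.1 < x.1 ∨ x.1 = y.1 ∧ x.2 ≤ y.2) := by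
  simp [readingKey, Prod.Lex.toLex_le_toLex]

theorem sortedLT_map_readingKey_wBoxes (lam : YoungDiagram) (n : ℕ) (T : ℕ → ℕ → ℕ × ℕ) :
    ((wBoxes lam n T).map (readingKey T)).SortedLT := by
  rw [List.sortedLT_iff_pairwise, List.pairwise_map, wBoxes, List.pairwise_flatMap]
  refine ⟨fun k _ ↦ List.pairwise_flatMap.2 ⟨fun r _ ↦ ?_, ?_⟩, ?_⟩
  · rw [List.pairwise_map]
    refine (List.pairwise_lt_range.filter _).imp_of_mem fun hx hy hxy ↦ ?_
    simp only [List.mem_filter, decide_eq_true_eq] at hx hy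
    exact readingKey_lt_iff.2 (.inr ⟨hx.2.trans hy.2.symm, .inr ⟨rfl, hxy⟩⟩)
  · refine List.pairwise_reverse.2 (List.pairwise_lt_range.imp fun hlt x hx y hy ↦ ?_)
    simp only [List.mem_map, List.mem_filter, decide_eq_true_eq] at hx hy
    obtain ⟨c, ⟨-, hc⟩, rfl⟩ := hx
    obtain ⟨d, ⟨-, hd⟩, rfl⟩ := hy
    exact readingKey_lt_iff.2 (.inr ⟨hc.trans hd.symm, .inl hlt⟩)
  · refine List.pairwise_lt_range.imp fun hlt x hx y hy ↦ readingKey_lt_iff.2 (.inl ?_)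
    simp only [List.mem_flatMap, List.mem_map, List.mem_filter, decide_eq_true_eq] at hx hy
    obtain ⟨r, -, c, ⟨-, hc⟩, rfl⟩ := hx
    obtain ⟨s, -, d, ⟨-, hd⟩, rfl⟩ := hy
    simpa only [hc, hd, Nat.add_lt_add_iff_right] using hlt

theorem nodup_wBoxes (lam : YoungDiagram) (n : ℕ) (T : ℕ → ℕ → ℕ × ℕ) :
    (wBoxes lam n T).Nodup :=
  (sortedLT_map_readingKey_wBoxes lam n T).nodup.of_map

theorem readingKey_getElem_wBoxes_lt_iff (hp : p < (wBoxes lam n T).length)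
    (hq : q < (wBoxes lam n T).length) :
    readingKey T (wBoxes lam n T)[p] < readingKey T (wBoxes lam n T)[q] ↔ p < q :=
  apply_getElem_lt_iff_of_sortedLT_map (sortedLT_map_readingKey_wBoxes lam n T) hp hq

theorem mem_wBoxes_iff {x : ℕ × ℕ} :
    x ∈ wBoxes lam n T ↔ x ∈ lam ∧ 1 ≤ (T x.1 x.2).1 ∧ (T x.1 x.2).1 ≤ n := by
  obtain ⟨r, c⟩ := x
  simp only [wBoxes, List.mem_flatMap, List.mem_map, List.mem_filter, decide_eq_true_eq,
    List.mem_range, List.mem_reverse, Prod.mk.injEq]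
  constructor
  · rintro ⟨k, hk, _, -, _, ⟨hc, hTk⟩, rfl, rfl⟩
    exact ⟨YoungDiagram.mem_iff_lt_rowLen.2 hc, by omega⟩
  · rintro ⟨hrc, hpos, hle⟩
    have hcol : (r, 0) ∈ lam := lam.up_left_mem le_rfl c.zero_le hrc
    exact ⟨(T r c).1 - 1, by omega, r, YoungDiagram.mem_iff_lt_colLen.1 hcol, c,
      ⟨YoungDiagram.mem_iff_lt_rowLen.1 hrc, by omega⟩, rfl, rfl⟩

theorem IsBitabT.mem_wBoxes (hT : IsBitabT lam n m T) {x : ℕ × ℕ} :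
    x ∈ wBoxes lam n T ↔ x ∈ lam :=
  mem_wBoxes_iff.trans (and_iff_left_of_imp fun hx ↦ (hT.1 x.1 x.2 hx).1)

theorem IsBitabT.exists_getElem_wBoxes_eq (hT : IsBitabT lam n m T) {x : ℕ × ℕ} (hx : x ∈ lam) :
    ∃ (s : ℕ) (hs : s < (wBoxes lam n T).length), (wBoxes lam n T)[s] = x :=
  List.mem_iff_getElem.1 (hT.mem_wBoxes.2 hx)

theorem getD_wWordT (hp : p < (wBoxes lam n T).length) :
    (wWordT lam n T).getD p 0 =
      (T (wBoxes lam n T)[p].1 (wBoxes lam n T)[p].2).2 := by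
  rw [List.getD_eq_getElem _ _ (by simpa [wWordT])]
  exact List.getElem_map _

theorem IsBitabT.mem_and_letter_eq_of_unmatchedOpen (hT : IsBitabT lam n m T)
    (hp : UnmatchedOpen (wWordT lam n T) i p) (hp' : p < (wBoxes lam n T).length) {B : ℕ × ℕ}
    (hB : (wBoxes lam n T)[p] = B) : B ∈ lam ∧ (T B.1 B.2).2 = i + 1 := by
  subst hB
  exact ⟨hT.mem_wBoxes.1 (List.getElem_mem hp'), getD_wWordT hp' ▸ hp.2.1⟩

/-- The boxes of `lam` read from the box `B` up to the box `D`, both included, in the sort-by-top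
reading order of `T`. -/
def readingInterval (lam : YoungDiagram) (T : ℕ → ℕ → ℕ × ℕ) (B D : ℕ × ℕ) : Finset (ℕ × ℕ) :=
  {x ∈ lam.cells | readingKey T x ∈ Set.Icc (readingKey T B) (readingKey T D)}

theorem mem_readingInterval {B D x : ℕ × ℕ} : x ∈ readingInterval lam T B D ↔
    x ∈ lam ∧ readingKey T B ≤ readingKey T x ∧ readingKey T x ≤ readingKey T D := by
  simp [readingInterval]

theorem IsBitabT.count_take_drop_wWordT (hT : IsBitabT lam n m T)
    (hp : p < (wBoxes lam n T).length) (hq : q < (wBoxes lam n T).length) (j : ℕ) :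
    (((wWordT lam n T).drop p).take (q + 1 - p)).count j =
      #{x ∈ readingInterval lam T (wBoxes lam n T)[p] (wBoxes lam n T)[q] |
        (T x.1 x.2).2 = j} := by
  have hnodup : (((wBoxes lam n T).drop p).take (q + 1 - p)).Nodup :=
    (nodup_wBoxes lam n T).sublist ((List.take_sublist _ _).trans (List.drop_sublist _ _))
  have hwindow : (((wBoxes lam n T).drop p).take (q + 1 - p)).toFinset =
      readingInterval lam T (wBoxes lam n T)[p] (wBoxes lam n T)[q] := by
    ext x
    rw [List.mem_toFinset, mem_readingInterval, ← hT.mem_wBoxes]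
    exact mem_take_drop_iff_of_sortedLT_map (sortedLT_map_readingKey_wBoxes lam n T) hp hq
  rw [wWordT, ← List.map_drop, ← List.map_take, count_map_eq_card_filter_toFinset hnodup, hwindow]

theorem IsBitabT.card_lt_card_of_unmatchedOpen (hT : IsBitabT lam n m T)
    (hp : UnmatchedOpen (wWordT lam n T) i p) (hp' : p < (wBoxes lam n T).length) {D : ℕ × ℕ}
    (hD : D ∈ lam) (hlt : readingKey T (wBoxes lam n T)[p] < readingKey T D) :
    #{x ∈ readingInterval lam T (wBoxes lam n T)[p] D | (T x.1 x.2).2 = i} <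
      #{x ∈ readingInterval lam T (wBoxes lam n T)[p] D | (T x.1 x.2).2 = i + 1} := by
  obtain ⟨q, hq, rfl⟩ := hT.exists_getElem_wBoxes_eq hD
  rw [readingKey_getElem_wBoxes_lt_iff] at hlt
  simpa only [hT.count_take_drop_wWordT hp' hq] using hp.2.2 q hlt.le (by simpa [wWordT])

end ReadingOrder

section LeftNeighbour

variable {r c : ℕ}

theorem IsBitabT.exists_getElem_wBoxes_eq_left (hT : IsBitabT lam n m T)
    (hp : p < (wBoxes lam n T).length) (hB : (wBoxes lam n T)[p] = (r, c + 1))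
    (hA : (r, c) ∈ lam) (hfst : (T r c).1 = (T r (c + 1)).1) :
    ∃ (s : ℕ) (hs : s < (wBoxes lam n T).length), p = s + 1 ∧ (wBoxes lam n T)[s] = (r, c) := by
  obtain ⟨s, hs, hsA⟩ := hT.exists_getElem_wBoxes_eq hA
  refine ⟨s, hs, ?_, hsA⟩
  have hsp : s < p := by
    rw [← readingKey_getElem_wBoxes_lt_iff hs hp, hsA, hB, readingKey_lt_iff]
    exact .inr ⟨hfst, .inr ⟨rfl, c.lt_succ_self⟩⟩
  by_contra hne
  have hs' : s + 1 < (wBoxes lam n T).length := by omega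
  have hafter := (readingKey_getElem_wBoxes_lt_iff hs hs').2 s.lt_succ_self
  have hbefore := (readingKey_getElem_wBoxes_lt_iff hs' hp).2 (by omega)
  rw [hsA, readingKey_lt_iff] at hafter
  rw [hB, readingKey_lt_iff] at hbefore
  dsimp only at hafter hbefore
  omega

theorem IsBitabT.left_lexLe_of_leftmost (hT : IsBitabT lam n m T)
    (hp : UnmatchedOpen (wWordT lam n T) i p)
    (hleftmost : ∀ p', p' < p → ¬ UnmatchedOpen (wWordT lam n T) i p')
    (hp' : p < (wBoxes lam n T).length) (hB : (wBoxes lam n T)[p] = (r, c + 1)) :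
    lexLe (T r c) ((T r (c + 1)).1, i) := by
  obtain ⟨hBlam, hletter⟩ := hT.mem_and_letter_eq_of_unmatchedOpen hp hp' hB
  have hle : lexLe (T r c) (T r (c + 1)) := hT.2.1 r c (c + 1) hBlam c.le_succ
  refine lexLe_of_lexLe_succ_of_ne (by rwa [← hletter]) fun hA ↦ ?_
  obtain ⟨s, hs, rfl, hsA⟩ := hT.exists_getElem_wBoxes_eq_left hp' hB
    (lam.up_left_mem le_rfl c.le_succ hBlam) (by rw [hA])
  refine hleftmost s s.lt_succ_self (hp.of_succ ?_)
  rw [getD_wWordT hs, hsA, hA]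

end LeftNeighbour

section UpperNeighbour

variable {r c : ℕ}

theorem exists_last_eq_in_row (T : ℕ → ℕ → ℕ × ℕ) (hrc : (r, c) ∈ lam) :
    ∃ d, (r, d) ∈ lam ∧ T r d = T r c ∧ ∀ y, (r, y) ∈ lam → T r y = T r c → y ≤ d := by
  let S : Finset ℕ := {y ∈ range (lam.rowLen r) | T r y = T r c}
  have mem_S {y : ℕ} : y ∈ S ↔ (r, y) ∈ lam ∧ T r y = T r c := by
    simp [S, YoungDiagram.mem_iff_lt_rowLen]
  have hcS : c ∈ S := mem_S.2 ⟨hrc, rfl⟩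
  obtain ⟨hd, hTd⟩ := mem_S.1 (S.max'_mem ⟨c, hcS⟩)
  exact ⟨S.max' ⟨c, hcS⟩, hd, hTd, fun y hy hTy ↦ S.le_max' y (mem_S.2 ⟨hy, hTy⟩)⟩

theorem IsBitabT.above_eq {k y : ℕ} (hT : IsBitabT lam n m T) (hy : (r + 1, y) ∈ lam)
    (hcy : c ≤ y) (hA : T r c = (k, i)) (hTy : T (r + 1) y = (k, i + 1)) : T r y = (k, i) := by
  have hge : lexLe (T r c) (T r y) := hT.2.1 r c y (lam.up_left_mem r.le_succ le_rfl hy) hcy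
  have hlt : lexLt (T r y) (T (r + 1) y) := hT.2.2 r (r + 1) y hy r.lt_succ_self
  simp only [hA, hTy, lexLe, lexLt, Prod.ext_iff] at *
  omega

theorem IsBitabT.position_of_letter_succ_of_mem_readingInterval {k d : ℕ} {x : ℕ × ℕ}
    (hT : IsBitabT lam n m T) (hB : (T (r + 1) c).1 = k) (hD : (r, d) ∈ lam)
    (hTD : T r d = (k, i)) (hx : x ∈ readingInterval lam T (r + 1, c) (r, d))
    (hxletter : (T x.1 x.2).2 = i + 1) :
    x.1 = r + 1 ∧ c ≤ x.2 ∧ T (r + 1) x.2 = (k, i + 1) := by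
  obtain ⟨x, y⟩ := x
  simp only [mem_readingInterval, readingKey_le_iff, hB, hTD] at hx hxletter ⊢
  obtain ⟨-, hBx, hxD⟩ := hx
  have hfst : (T x y).1 = k := by omega
  have hrow : x ≠ r := by
    rintro rfl
    have hle : lexLe (T x y) (T x d) := hT.2.1 x y d hD (by omega)
    simp only [hTD, lexLe] at hle
    omega
  obtain rfl : x = r + 1 := by omega
  exact ⟨rfl, by omega, Prod.ext hfst hxletter⟩

theorem IsBitabT.card_letter_succ_le_card_letter {k d : ℕ} (hT : IsBitabT lam n m T)
    (hA : T r c = (k, i)) (hB : (T (r + 1) c).1 = k) (hD : (r, d) ∈ lam) (hTD : T r d = (k, i))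
    (hlast : ∀ y, (r, y) ∈ lam → T r y = (k, i) → y ≤ d) :
    #{x ∈ readingInterval lam T (r + 1, c) (r, d) | (T x.1 x.2).2 = i + 1} ≤
      #{x ∈ readingInterval lam T (r + 1, c) (r, d) | (T x.1 x.2).2 = i} := by
  refine card_le_card_of_injOn (fun x ↦ (r, x.2)) ?_ ?_
  · rintro ⟨x, y⟩ hx
    obtain ⟨hx, hletter⟩ := mem_filter.1 hx
    obtain ⟨rfl, hcy, hTy⟩ := hT.position_of_letter_succ_of_mem_readingInterval hB hD hTD hx hletter
    have hxlam := (mem_readingInterval.1 hx).1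
    have hup : (r, y) ∈ lam := lam.up_left_mem r.le_succ le_rfl hxlam
    have hTup : T r y = (k, i) := hT.above_eq hxlam hcy hA hTy
    have hyd := hlast y hup hTup
    simp [mem_readingInterval, readingKey_le_iff, hup, hTup, hB, hTD, hyd]
  · intro x hx y hy hxy
    obtain ⟨hx, hxletter⟩ := mem_filter.1 hx
    obtain ⟨hy, hyletter⟩ := mem_filter.1 hy
    have hxrow := (hT.position_of_letter_succ_of_mem_readingInterval hB hD hTD hx hxletter).1
    have hyrow := (hT.position_of_letter_succ_of_mem_readingInterval hB hD hTD hy hyletter).1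
    exact Prod.ext (hxrow.trans hyrow.symm) (Prod.ext_iff.1 hxy).2

theorem IsBitabT.above_lexLt_of_unmatchedOpen (hT : IsBitabT lam n m T)
    (hp : UnmatchedOpen (wWordT lam n T) i p) (hp' : p < (wBoxes lam n T).length)
    (hB : (wBoxes lam n T)[p] = (r + 1, c)) : lexLt (T r c) ((T (r + 1) c).1, i) := by
  obtain ⟨hBlam, hletter⟩ := hT.mem_and_letter_eq_of_unmatchedOpen hp hp' hB
  have hlt : lexLt (T r c) (T (r + 1) c) := hT.2.2 r (r + 1) c hBlam r.lt_succ_self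
  refine lexLt_of_lexLt_succ_of_ne (by rwa [← hletter]) fun hA ↦ ?_
  obtain ⟨d, hD, hTD, hlast⟩ :=
    exists_last_eq_in_row T (lam.up_left_mem r.le_succ le_rfl hBlam)
  rw [hA] at hTD hlast
  have hBD : readingKey T (r + 1, c) < readingKey T (r, d) := by
    simp [readingKey_lt_iff, hTD]
  have hcard := hT.card_lt_card_of_unmatchedOpen hp hp' hD (by rwa [hB])
  rw [hB] at hcard
  exact hcard.not_ge (hT.card_letter_succ_le_card_letter hA rfl hD hTD hlast)

end UpperNeighbour

section SetEntry

variable {B v : ℕ × ℕ} {r c x x' y y' : ℕ}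

/-- The filling obtained from `T` by changing the entry of the box `B` to `v`. -/
def setEntry (T : ℕ → ℕ → ℕ × ℕ) (B v : ℕ × ℕ) : ℕ → ℕ → ℕ × ℕ :=
  fun r c ↦ if (r, c) = B then v else T r c

theorem setEntry_self : setEntry T (r, c) v r c = v :=
  if_pos rfl

theorem setEntry_of_ne (h : (x, y) ≠ B) : setEntry T B v x y = T x y :=
  if_neg h

theorem IsBitabT.lexLe_setEntry_row (hT : IsBitabT lam n m T) (hB : (r, c) ∈ lam)
    (hv : lexLe v (T r c)) (hleft : ∀ y, y + 1 = c → lexLe (T r y) v)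
    (hy' : (x, y') ∈ lam) (hyy' : y ≤ y') :
    lexLe (setEntry T (r, c) v x y) (setEntry T (r, c) v x y') := by
  have hrow := hT.2.1 x y y' hy' hyy'
  by_cases h : (x, y) = (r, c) <;> by_cases h' : (x, y') = (r, c)
  · rw [(Prod.mk.inj (h.trans h'.symm)).2, lexLe_iff_toLex_le]
  · obtain ⟨rfl, rfl⟩ := Prod.mk.inj h
    rw [setEntry_self, setEntry_of_ne h']
    simp only [lexLe_iff_toLex_le] at *
    exact hv.trans hrow
  · obtain ⟨rfl, rfl⟩ := Prod.mk.inj h'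
    have hlt : y < y' := hyy'.lt_of_ne fun e ↦ h (by rw [e])
    have hpred := hT.2.1 x y (y' - 1) (lam.up_left_mem le_rfl (y'.sub_le 1) hB) (by omega)
    have hleft := hleft (y' - 1) (by omega)
    rw [setEntry_self, setEntry_of_ne h]
    simp only [lexLe_iff_toLex_le] at *
    exact hpred.trans hleft
  · rwa [setEntry_of_ne h, setEntry_of_ne h']

theorem IsBitabT.lexLt_setEntry_col (hT : IsBitabT lam n m T) (hB : (r, c) ∈ lam)
    (hv : lexLe v (T r c)) (habove : ∀ x, x + 1 = r → lexLt (T x c) v)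
    (hx' : (x', y) ∈ lam) (hxx' : x < x') :
    lexLt (setEntry T (r, c) v x y) (setEntry T (r, c) v x' y) := by
  have hcol := hT.2.2 x x' y hx' hxx'
  by_cases h : (x, y) = (r, c) <;> by_cases h' : (x', y) = (r, c)
  · exact absurd (Prod.mk.inj (h.trans h'.symm)).1 hxx'.ne
  · obtain ⟨rfl, rfl⟩ := Prod.mk.inj h
    rw [setEntry_self, setEntry_of_ne h']
    simp only [lexLe_iff_toLex_le, lexLt_iff_toLex_lt] at *
    exact hv.trans_lt hcol
  · obtain ⟨rfl, rfl⟩ := Prod.mk.inj h'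
    have habove := habove (x' - 1) (by omega)
    rw [setEntry_self, setEntry_of_ne h]
    obtain rfl | hlt : x = x' - 1 ∨ x < x' - 1 := by omega
    · exact habove
    · have hpred := hT.2.2 x (x' - 1) y (lam.up_left_mem (x'.sub_le 1) le_rfl hB) hlt
      simp only [lexLt_iff_toLex_lt] at *
      exact hpred.trans habove
  · rwa [setEntry_of_ne h, setEntry_of_ne h']

theorem IsBitabT.setEntry_of_lexLe (hT : IsBitabT lam n m T) (hB : (r, c) ∈ lam)
    (hv : lexLe v (T r c)) (hfst : 1 ≤ v.1) (hsnd : 1 ≤ v.2 ∧ v.2 ≤ m)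
    (hleft : ∀ y, y + 1 = c → lexLe (T r y) v) (habove : ∀ x, x + 1 = r → lexLt (T x c) v) :
    IsBitabT lam n m (setEntry T (r, c) v) := by
  refine ⟨fun x y hxy ↦ ?_, fun x y y' ↦ hT.lexLe_setEntry_row hB hv hleft,
    fun x x' y ↦ hT.lexLt_setEntry_col hB hv habove⟩
  by_cases h : (x, y) = (r, c)
  · obtain ⟨rfl, rfl⟩ := Prod.mk.inj h
    have hle := (hT.1 x y hxy).1.2
    rw [setEntry_self]
    unfold lexLe at hv
    exact ⟨⟨hfst, by omega⟩, hsnd⟩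
  · rw [setEntry_of_ne h]
    exact hT.1 x y hxy

theorem card_filter_setEntry_add (hB : B ∈ lam) (P : ℕ × ℕ → Prop) [DecidablePred P] :
    #{x ∈ lam.cells | P (setEntry T B v x.1 x.2)} + (if P (T B.1 B.2) then 1 else 0) =
      #{x ∈ lam.cells | P (T x.1 x.2)} + (if P v then 1 else 0) := by
  have hrest : ∑ x ∈ lam.cells.erase B, (if P (setEntry T B v x.1 x.2) then 1 else 0) =
      ∑ x ∈ lam.cells.erase B, (if P (T x.1 x.2) then 1 else 0) :=
    sum_congr rfl fun x hx ↦ by rw [setEntry_of_ne (ne_of_mem_erase hx)]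
  simp only [card_filter, ← add_sum_erase lam.cells _ ((YoungDiagram.mem_cells B).2 hB), hrest]
  rw [show setEntry T B v B.1 B.2 = v from setEntry_self]
  ring

theorem aWtT_setEntry_of_fst_eq (hB : B ∈ lam) (hfst : v.1 = (T B.1 B.2).1) (k : ℕ) :
    aWtT lam (setEntry T B v) k = aWtT lam T k := by
  simpa [hfst, aWtT] using card_filter_setEntry_add (T := T) (v := v) hB (·.1 = k)

theorem bWtT_setEntry_add (hB : B ∈ lam) (j : ℕ) :
    bWtT lam (setEntry T B v) j + (if (T B.1 B.2).2 = j then 1 else 0) =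
      bWtT lam T j + (if v.2 = j then 1 else 0) :=
  card_filter_setEntry_add hB (·.2 = j)

end SetEntry

end

/-- raising operators are well defined. Let `T ∈ B_λ(n,m)` and
`1 ≤ i ≤ m-1`. Suppose under the `i`-bracketing rule applied to `w(T)` some letter `i+1` is
unmatched, let `B` be the box of `T` corresponding to the leftmost unmatched letter `i+1`,
and let `T'` be obtained from `T` by changing the entry `(k, i+1)` of `B` to `(k, i)`. Then
`T' ∈ B_λ(n,m)`, `a(T') = a(T)`, and `b(T') = b(T) + e_i − e_{i+1}`. -/
theorem stmt_5 (lam : YoungDiagram) (n m : ℕ) (hn : 1 ≤ n) (hm : 1 ≤ m)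
    (T : ℕ → ℕ → ℕ × ℕ) (hT : IsBitabT lam n m T)
    (i : ℕ) (hi1 : 1 ≤ i) (hi2 : i ≤ m - 1)
    (p : ℕ) (hp : UnmatchedOpen (wWordT lam n T) i p)
    (hleftmost : ∀ p', p' < p → ¬ UnmatchedOpen (wWordT lam n T) i p')
    (B : ℕ × ℕ) (hB : B = (wBoxes lam n T).getD p (0, 0))
    (T' : ℕ → ℕ → ℕ × ℕ)
    (hT' : T' = fun r c => if (r, c) = B then ((T B.1 B.2).1, i) else T r c) :
    IsBitabT lam n m T' ∧
    (∀ k, aWtT lam T' k = aWtT lam T k) ∧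
    (∀ j, bWtT lam T' j =
      if j = i then bWtT lam T j + 1 else if j = i + 1 then bWtT lam T j - 1
      else bWtT lam T j) := by
  have hp' : p < (wBoxes lam n T).length := by simpa [wWordT] using hp.1
  rw [List.getD_eq_getElem _ _ hp', eq_comm] at hB
  obtain ⟨hBlam, hletter⟩ := hT.mem_and_letter_eq_of_unmatchedOpen hp hp' hB
  obtain rfl : T' = setEntry T B ((T B.1 B.2).1, i) := hT'
  obtain ⟨r, c⟩ := B
  dsimp only at hletter
  obtain ⟨⟨hfst, -⟩, -, hsnd⟩ := hT.1 r c hBlam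
  have hlower : lexLe ((T r c).1, i) (T r c) := .inr ⟨rfl, hletter ▸ i.le_succ⟩
  refine ⟨hT.setEntry_of_lexLe hBlam hlower hfst ⟨hi1, by dsimp only; omega⟩ ?_ ?_,
    aWtT_setEntry_of_fst_eq hBlam rfl, fun j ↦ ?_⟩
  · rintro y rfl
    exact hT.left_lexLe_of_leftmost hp hleftmost hp' hB
  · rintro x rfl
    exact hT.above_lexLt_of_unmatchedOpen hp hp' hB
  · have hcount := bWtT_setEntry_add (T := T) (v := ((T r c).1, i)) hBlam j
    grind
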